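/- arXiv:1310.7302 — 4 statements merged into one kernel-verified Lean document; each statement's English description precedes it below -/
import Mathlib

section
/- Let l ≥ 1 and let m₁, …, m_l, n be positive integers. If there exists a finitely injective surjection φ from the free product ℤ/m₁ * ℤ/m₂ * ⋯ * ℤ/m_l (of the cyclic groups of orders m₁, …, m_l) onto the cyclic group ℤ/n, then n = lcm(m₁, m₂, …, m_l). -/
/-!
A homomorphism `φ` from a free product `*ᵢ Gᵢ` onto a commutative group `A` is determined by its
restrictions `Gᵢ → A`, and, since `A` is commutative, `a ↦ a ^ k` is a homomorphism. Hence `k`-th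
powers vanish on `A` if and only if they vanish on the image of every `Gᵢ`. When the `Gᵢ` are
torsion, finite injectivity embeds each of them in `A`, so the exponent of `A` is the least common
multiple of the exponents of the `Gᵢ`.
-/

open Function Monoid

section FinitelyInjective

variable {G H K : Type*} [Group G] [Group H] [Monoid K]

/-- The homomorphism `φ` is *finitely injective*: it is injective on every finite subgroup of its
domain. Together with surjectivity this is the notion of a finitely injective surjection. -/
def FinitelyInjective (φ : G →* K) : Prop :=
  ∀ S : Subgroup G, (S : Set G).Finite → Set.InjOn φ (S : Set G)

theorem FinitelyInjective.comp_of_injective {φ : H →* K} (hφ : FinitelyInjective φ) {ψ : G →* H}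
    (hψ : Injective ψ) : FinitelyInjective (φ.comp ψ) := fun S hS ↦
  (hφ (S.map ψ) (hS.image ψ)).comp hψ.injOn fun _ ↦ Subgroup.mem_map_of_mem ψ

theorem FinitelyInjective.injective_of_isMulTorsion {φ : G →* K} (hφ : FinitelyInjective φ)
    (hG : IsMulTorsion G) : Injective φ := by
  refine (injective_iff_map_eq_one φ).2 fun g hg ↦ ?_
  have finite_zpowers_g : (Subgroup.zpowers g : Set G).Finite :=
    finite_zpowers.2 (hG g)
  exact hφ _ finite_zpowers_g (Subgroup.mem_zpowers g) (one_mem _) (hg.trans (map_one φ).symm)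

end FinitelyInjective

section CoprodI

variable {ι A : Type*} [CommMonoid A]

theorem forall_map_coprodI_pow_eq_one_iff {M : ι → Type*} [∀ i, Monoid (M i)]
    (φ : CoprodI M →* A) (k : ℕ) :
    (∀ x, φ x ^ k = 1) ↔ ∀ i (g : M i), φ (CoprodI.of g) ^ k = 1 := by
  refine ⟨fun h i g ↦ h _, fun h x ↦ ?_⟩
  have pow_comp_eq_one : (powMonoidHom k).comp φ = 1 :=
    CoprodI.ext_hom _ _ fun i ↦ MonoidHom.ext (h i)
  exact DFunLike.congr_fun pow_comp_eq_one x

theorem exponent_dvd_iff_of_surjective_coprodI {M : ι → Type*} [∀ i, Monoid (M i)]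
    {φ : CoprodI M →* A} (hsurj : Surjective φ)
    (hinj : ∀ i, Injective (φ.comp (CoprodI.of (i := i)))) (k : ℕ) :
    exponent A ∣ k ↔ ∀ i, exponent (M i) ∣ k := by
  have pow_map_of_eq_one_iff (i : ι) (g : M i) : φ (CoprodI.of g) ^ k = 1 ↔ g ^ k = 1 := by
    simpa only [map_pow, MonoidHom.comp_apply] using map_eq_one_iff _ (hinj i) (x := g ^ k)
  simp only [exponent_dvd_iff_forall_pow_eq_one, hsurj.forall, forall_map_coprodI_pow_eq_one_iff,
    pow_map_of_eq_one_iff]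

theorem stmt_0_general [Fintype ι] {G : ι → Type*} [∀ i, Group (G i)]
    (hG : ∀ i, IsMulTorsion (G i)) {φ : CoprodI G →* A} (hsurj : Surjective φ)
    (hφ : FinitelyInjective φ) :
    exponent A = Finset.univ.lcm fun i ↦ exponent (G i) := by
  have hinj (i : ι) : Injective (φ.comp (CoprodI.of (i := i))) :=
    (hφ.comp_of_injective (CoprodI.of_injective i)).injective_of_isMulTorsion (hG i)
  refine eq_of_forall_dvd fun k ↦ ?_
  simp only [exponent_dvd_iff_of_surjective_coprodI hsurj hinj, Finset.lcm_dvd_iff,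
    Finset.mem_univ, true_imp_iff]

end CoprodI

/-- A group homomorphism is a *finitely injective surjection* if it is surjective and
its restriction to every finite subgroup of the domain is injective.

If there is a finitely injective surjection from the free product
`ℤ/m₁ * ℤ/m₂ * ⋯ * ℤ/m_l` of cyclic groups onto the cyclic group `ℤ/n`,
then `n = lcm(m₁, …, m_l)`. -/
theorem stmt_0 (l : ℕ) (hl : 1 ≤ l) (m : Fin l → ℕ) (hm : ∀ i, 0 < m i)
    (n : ℕ) (hn : 0 < n)
    (φ : Monoid.CoprodI (fun i : Fin l => Multiplicative (ZMod (m i))) →*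
      Multiplicative (ZMod n))
    (hsurj : Function.Surjective φ)
    (hfininj : ∀ H : Subgroup
        (Monoid.CoprodI (fun i : Fin l => Multiplicative (ZMod (m i)))),
      (H : Set (Monoid.CoprodI (fun i : Fin l => Multiplicative (ZMod (m i))))).Finite →
        Set.InjOn φ (H : Set (Monoid.CoprodI
          (fun i : Fin l => Multiplicative (ZMod (m i)))))) :
    n = Finset.univ.lcm m := by
  have (i : Fin l) : NeZero (m i) := ⟨(hm i).ne'⟩
  simpa only [exponent_multiplicative, ZMod.exponent] using
    stmt_0_general (fun _ ↦ isMulTorsion_of_finite) hsurj hfininj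
end

section
/- Let G be a group acting on a set M, let h ∈ G be an element of finite order, and let x ∈ M. Suppose that h · x lies in the orbit of x under the subgroup ⟨h²⟩ generated by h² (i.e., the coset of x in M/⟨h²⟩ is fixed by the induced action of h). Then the orbit of x under ⟨h²⟩ is finite and its cardinality is odd; equivalently, the index in ⟨h²⟩ of the stabilizer of x intersected with ⟨h²⟩ is odd. -/
/-! The point `x` is moved by `⟨h⟩` around a cycle of length `p = period h x`, possibly infinite
(`p = 0`). On this cycle `h ^ n` acts as translation by `n` on `ℤ / p`, so it reaches `h • x` from
`x` exactly when `n` is a unit modulo `p`. The length of the cycle of `h ^ n` through `x` divides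
`p`, so it is coprime to `n` as well; and for `n ≠ 1` it cannot be infinite, since `0` is coprime
only to `1`. -/

open MulAction Subgroup

section

variable {M X : Type*} [Monoid M] [MulAction M X]

theorem period_pow_dvd_period (m : M) (n : ℕ) (x : X) : period (m ^ n) x ∣ period m x := by
  rw [← pow_smul_eq_iff_period_dvd, ← pow_mul, pow_smul_eq_iff_period_dvd]
  exact dvd_mul_left _ _

end

section

variable {G X : Type*} [Group G] [MulAction G X]

theorem zpow_smul_eq_zpow_smul_iff_period_dvd_sub {g : G} {x : X} {i j : ℤ} :
    g ^ i • x = g ^ j • x ↔ (period g x : ℤ) ∣ i - j := by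
  rw [← zpow_smul_eq_iff_period_dvd, sub_eq_neg_add, zpow_add, zpow_neg, mul_smul,
    inv_smul_eq_iff]

theorem mem_orbit_zpowers_iff {g : G} {x y : X} :
    y ∈ orbit (zpowers g) x ↔ ∃ k : ℤ, g ^ k • x = y := by
  simp [mem_orbit_iff, Subgroup.smul_def]

theorem ncard_orbit_zpowers (g : G) (x : X) : (orbit (zpowers g) x).ncard = period g x :=
  (Nat.card_congr (orbitZPowersEquiv g x)).trans (Nat.card_zmod _)

theorem smul_mem_orbit_zpowers_pow_iff_coprime {g : G} {n : ℕ} {x : X} :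
    g • x ∈ orbit (zpowers (g ^ n)) x ↔ (period g x).Coprime n := by
  calc g • x ∈ orbit (zpowers (g ^ n)) x
      ↔ ∃ k : ℤ, g ^ (1 : ℤ) • x = g ^ (n * k : ℤ) • x := by
        simp only [mem_orbit_zpowers_iff, zpow_mul, zpow_natCast, zpow_one, eq_comm]
    _ ↔ ∃ k : ℤ, (period g x : ℤ) ∣ 1 - n * k := by
        simp only [zpow_smul_eq_zpow_smul_iff_period_dvd_sub]
    _ ↔ IsCoprime (period g x : ℤ) n := by
        rw [IsCoprime, exists_comm]
        exact exists₂_congr fun k c ↦ by grind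
    _ ↔ (period g x).Coprime n := Nat.isCoprime_iff_coprime

theorem stmt_4_general {h : G} {n : ℕ} (hn : n ≠ 1) {x : X}
    (hx : h • x ∈ orbit (zpowers (h ^ n)) x) :
    (orbit (zpowers (h ^ n)) x).Finite ∧ (orbit (zpowers (h ^ n)) x).ncard.Coprime n := by
  have hcoprime : (orbit (zpowers (h ^ n)) x).ncard.Coprime n := by
    rw [ncard_orbit_zpowers]
    exact (smul_mem_orbit_zpowers_pow_iff_coprime.mp hx).coprime_dvd_left
      (period_pow_dvd_period h n x)
  refine ⟨Set.finite_of_ncard_ne_zero fun hzero ↦ hn ?_, hcoprime⟩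
  rwa [hzero, Nat.coprime_zero_left] at hcoprime

end

/-- Let a group `G` act on a set `M`, let `h ∈ G` have finite order and let `x ∈ M`.
If `h • x` lies in the orbit of `x` under the subgroup `⟨h²⟩` generated by `h²`
(i.e. the class of `x` in `M/⟨h²⟩` is fixed by `h`), then the `⟨h²⟩`-orbit of `x`
is finite and has odd cardinality. -/
theorem stmt_4 {G : Type*} [Group G] {M : Type*} [MulAction G M]
    (h : G) (hfin : IsOfFinOrder h) (x : M)
    (hx : h • x ∈ MulAction.orbit (Subgroup.zpowers (h ^ 2)) x) :
    (MulAction.orbit (Subgroup.zpowers (h ^ 2)) x).Finite ∧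
      Odd (MulAction.orbit (Subgroup.zpowers (h ^ 2)) x).ncard := by
  simpa only [Nat.coprime_two_right] using stmt_4_general (by decide : 2 ≠ 1) hx
end

section
/- Let g be a positive integer and let A, B, C, D, X be g × g matrices with integer entries. Suppose X is non-degenerate (det X ≠ 0) and that AᵀXB = −Xᵀ, CᵀXD = Xᵀ, AD = CB, and BC = DA, where Mᵀ denotes the transpose of M. Then g is even. -/
open Matrix

/-!
Comparing determinants in `AᵀXB = −Xᵀ` and `CᵀXD = Xᵀ` gives `det A * det B = (-1) ^ g` and
`det C * det D = 1`, while `AD = CB` makes the product of these four determinants a square.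
Hence `(-1) ^ g` is a square, which is impossible for odd `g`.
-/

section

open scoped nonZeroDivisors

variable {n R : Type*} [Fintype n] [DecidableEq n] [CommRing R] {A B C D X : Matrix n n R}

theorem det_mul_det_eq_pow_card_of_transpose_mul_mul_eq_smul {c : R} (hX : X.det ∈ R⁰)
    (h : Aᵀ * X * B = c • Xᵀ) : A.det * B.det = c ^ Fintype.card n := by
  refine (mul_cancel_right_mem_nonZeroDivisors hX).mp ?_
  calc A.det * B.det * X.det = (Aᵀ * X * B).det := by
        rw [det_mul, det_mul, det_transpose, mul_right_comm]
    _ = c ^ Fintype.card n * X.det := by rw [h, det_smul, det_transpose]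

theorem isSquare_det_mul_det_mul_det_mul_det_of_mul_eq_mul (h : A * D = C * B) :
    IsSquare ((A.det * B.det) * (C.det * D.det)) := by
  have hdet : A.det * D.det = C.det * B.det := by rw [← det_mul, h, det_mul]
  exact ⟨C.det * B.det, by linear_combination C.det * B.det * hdet⟩

theorem even_of_isSquare_neg_one_pow {M : Type*} [Monoid M] [HasDistribNeg M] {k : ℕ}
    (hneg : ¬ IsSquare (-1 : M)) (hk : IsSquare ((-1 : M) ^ k)) : Even k := by
  by_contra hodd
  rw [(Nat.not_even_iff_odd.mp hodd).neg_one_pow] at hk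
  exact hneg hk

theorem stmt_5_general (hneg : ¬ IsSquare (-1 : R)) (hX : X.det ∈ R⁰)
    (h1 : Aᵀ * X * B = -Xᵀ) (h2 : Cᵀ * X * D = Xᵀ) (h3 : A * D = C * B) :
    Even (Fintype.card n) := by
  have hAB : A.det * B.det = (-1) ^ Fintype.card n :=
    det_mul_det_eq_pow_card_of_transpose_mul_mul_eq_smul hX (by rw [h1, neg_one_smul])
  have hCD : C.det * D.det = 1 := by
    simpa only [one_pow] using
      det_mul_det_eq_pow_card_of_transpose_mul_mul_eq_smul hX (h2.trans (one_smul R Xᵀ).symm)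
  have hsq := isSquare_det_mul_det_mul_det_mul_det_of_mul_eq_mul h3
  rw [hAB, hCD, mul_one] at hsq
  exact even_of_isSquare_neg_one_pow hneg hsq

end

/-- If `A, B, C, D, X` are `g × g` integer matrices with `det X ≠ 0` satisfying
`AᵀXB = −Xᵀ`, `CᵀXD = Xᵀ`, `AD = CB` and `BC = DA`, then `g` is even. -/
theorem stmt_5 (g : ℕ) (hg : 0 < g) (A B C D X : Matrix (Fin g) (Fin g) ℤ)
    (hX : X.det ≠ 0)
    (h1 : Aᵀ * X * B = -Xᵀ)
    (h2 : Cᵀ * X * D = Xᵀ)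
    (h3 : A * D = C * B)
    (h4 : B * C = D * A) :
    Even g := by
  have hneg : ¬ IsSquare (-1 : ℤ) := fun h => absurd h.nonneg (by decide)
  simpa only [Fintype.card_fin] using
    stmt_5_general hneg (mem_nonZeroDivisors_of_ne_zero hX) h1 h2 h3
end

section
/- Let g ≥ 2 be an even integer. Let g′, k, N be integers with g′ ≥ 0, k ≥ 0, k even, and N ≥ g/2 + 1, satisfying the Riemann–Hurwitz relation 2 − 2g = N(2 − 2g′) − k(N − 1). Then (g′, k, N) is one of the four triples (2, 0, g−1), (1, 2, g), (0, 4, g+1), (0, 6, g/2 + 1). -/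
/-!
Write `k = 2j` and `d = g' + j - 1`, so that `-2d` is the Euler characteristic of the quotient
surface with its `k` singular points removed. The Riemann–Hurwitz relation becomes
`g = g' + d(N - 1)`. A quotient with `d ≤ 0` would give `g ≤ g' ≤ 1`, while `d ≥ 3` would give
`g ≥ 3(N - 1) ≥ 3g/2`. Hence `d` is `1` or `2`: the first value leaves `g' = 0, 1, 2`, and the
second forces `g' = 0` because `g = g' + 2(N - 1) ≥ g' + g`.
-/

section RiemannHurwitz

variable {g g' j d k M N : ℤ}

theorem riemannHurwitz_two_mul_iff :
    2 - 2 * g = N * (2 - 2 * g') - 2 * j * (N - 1) ↔ g = g' + (g' + j - 1) * (N - 1) := by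
  constructor <;> intro h <;> linarith

theorem le_two_of_eq_add_mul (hg' : 0 ≤ g') (hg : 0 < g) (hM : g ≤ 2 * M)
    (h : g = g' + d * M) : d ≤ 2 := by
  by_contra! hd
  have : 3 * M ≤ d * M := mul_le_mul_of_nonneg_right hd (by linarith)
  linarith

theorem one_le_of_eq_add_mul (hj : 0 ≤ j) (hg : 1 < g) (hM : 0 ≤ M)
    (h : g = g' + (g' + j - 1) * M) : 1 ≤ g' + j - 1 := by
  by_contra! hd
  have : (g' + j - 1) * M ≤ 0 := mul_nonpos_of_nonpos_of_nonneg (by linarith) hM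
  linarith

/- The bound on `N` avoids `g / 2`, which rounds down: for odd `g` the bound `g / 2 + 1 ≤ N` would
also admit `(1, 4, (g + 1) / 2)`. -/
theorem stmt_6_general (hg : 2 ≤ g) (hg' : 0 ≤ g') (hk : 0 ≤ k) (hke : Even k)
    (hN : g + 2 ≤ 2 * N) (hRH : 2 - 2 * g = N * (2 - 2 * g') - k * (N - 1)) :
    (g', k, N) = (2, 0, g - 1) ∨ (g', k, N) = (1, 2, g) ∨
      (g', k, N) = (0, 4, g + 1) ∨ (g', k, N) = (0, 6, g / 2 + 1) := by
  obtain ⟨j, rfl⟩ := even_iff_exists_two_mul.mp hke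
  have hj : 0 ≤ j := by linarith
  have hgenus : g = g' + (g' + j - 1) * (N - 1) := riemannHurwitz_two_mul_iff.mp hRH
  have hd_le : g' + j - 1 ≤ 2 := le_two_of_eq_add_mul hg' (by linarith) (by linarith) hgenus
  have hd_ge : 1 ≤ g' + j - 1 := one_le_of_eq_add_mul hj (by linarith) (by linarith) hgenus
  simp only [Prod.mk.injEq]
  obtain hd | hd : g' + j - 1 = 1 ∨ g' + j - 1 = 2 := by omega
  · rw [hd] at hgenus
    obtain rfl | rfl | rfl : g' = 0 ∨ g' = 1 ∨ g' = 2 := by omega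
    all_goals omega
  · rw [hd] at hgenus
    obtain rfl : g' = 0 := by linarith
    omega

end RiemannHurwitz

/-- For even `g ≥ 2`, the only integer solutions `(g', k, N)` with `g' ≥ 0`, `k ≥ 0`,
`k` even, `N ≥ g/2 + 1` of the Riemann–Hurwitz relation
`2 − 2g = N(2 − 2g') − k(N − 1)` are
`(2, 0, g−1)`, `(1, 2, g)`, `(0, 4, g+1)` and `(0, 6, g/2 + 1)`. -/
theorem stmt_6 (g : ℤ) (hg : 2 ≤ g) (hge : Even g)
    (g' k N : ℤ) (hg' : 0 ≤ g') (hk : 0 ≤ k) (hke : Even k)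
    (hN : g / 2 + 1 ≤ N)
    (hRH : 2 - 2 * g = N * (2 - 2 * g') - k * (N - 1)) :
    (g', k, N) = (2, 0, g - 1) ∨ (g', k, N) = (1, 2, g) ∨
      (g', k, N) = (0, 4, g + 1) ∨ (g', k, N) = (0, 6, g / 2 + 1) := by
  have hN' : g + 2 ≤ 2 * N := by linarith [Int.two_mul_ediv_two_of_even hge]
  exact stmt_6_general hg hg' hk hke hN' hRH
end
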